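/- arXiv:1902.02378 — 3 statements merged into one kernel-verified Lean document; each statement's English description precedes it below -/
import Mathlib

section
/- Let R be a retract of F_n and H a finitely generated subgroup of F_n that is closed in the pro-p topology of F_n for some prime p. Then either H ≤ R, or rk(H ∩ R) < rk(H). -/
/-- `R` is a retract of the ambient group: there is an endomorphism with image `R`
restricting to the identity on `R` (equivalently, an idempotent endomorphism with image `R`). -/
def IsRetract {G : Type*} [Group G] (R : Subgroup G) : Prop :=
  ∃ r : G →* G, r.range = R ∧ ∀ x ∈ R, r x = x

/-- The subgroup `H` is free of rank `m`. -/
def HasFreeRank {G : Type*} [Group G] (H : Subgroup G) (m : ℕ) : Prop :=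
  ∃ φ : FreeGroup (Fin m) →* G, Function.Injective φ ∧ φ.range = H

/-- The closure of a subgroup `H` in the pro-`p` topology: the intersection of all
subgroups `H ⊔ N` (= `HN`) over normal subgroups `N` of `p`-power index. -/
def proPClosure {G : Type*} [Group G] (p : ℕ) (H : Subgroup G) : Subgroup G :=
  ⨅ N ∈ {N : Subgroup G | N.Normal ∧ ∃ k : ℕ, N.index = p ^ k}, H ⊔ N

theorem mulAutArrow_apply_apply_apply {G X M : Type*} [Group G] [MulAction G X] [Monoid M]
    (g : G) (F : X → M) (x : X) : (mulAutArrow g F : X → M) x = F (g⁻¹ • x) :=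
  rfl

/-- A homomorphism `K →* A` is recovered, at the base coset, from a cocycle on `G`
with values in the coinduced module `G ⧸ K → A`. -/
theorem exists_coinduced_cocycle {G A : Type*} [Group G] [CommGroup A] (K : Subgroup G)
    (φ : K →* A) :
    ∃ D : G → G ⧸ K → A, (∀ g h x, D (g * h) x = D g x * D h (g⁻¹ • x)) ∧
      ∀ k : K, D k ((1 : G) : G ⧸ K) = φ k := by
  have mem : ∀ (g : G) (x : G ⧸ K), x.out⁻¹ * g * (g⁻¹ • x).out ∈ K := by
    intro g x
    rw [mul_assoc, ← QuotientGroup.eq, ← smul_eq_mul, ← MulAction.Quotient.smul_mk]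
    simp
  refine ⟨fun g x => φ ⟨_, mem g x⟩, fun g h x => ?_, fun k => ?_⟩
  · rw [← map_mul]
    refine congrArg φ (Subtype.ext ?_)
    simp [mul_smul, mul_assoc]
  · have hk : ((k : G)⁻¹ • ((1 : G) : G ⧸ K)) = ((1 : G) : G ⧸ K) := by
      rw [MulAction.Quotient.smul_mk, QuotientGroup.eq]
      simp
    have h1 : ((1 : G) : G ⧸ K).out ∈ K := by
      have := (QuotientGroup.eq (s := K) (a := 1) (b := ((1 : G) : G ⧸ K).out)).1 (by simp)
      simpa using this
    have : (⟨_, mem k ((1 : G) : G ⧸ K)⟩ : K) = ⟨_, h1⟩⁻¹ * k * ⟨_, h1⟩ := by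
      ext
      simp [hk]
    change φ ⟨_, mem k _⟩ = φ k
    rw [this, map_mul, map_mul, map_inv, mul_comm, mul_inv_cancel_left]

/-- The value of a cocycle `D` on a free group at a word `w` and a coset `t` depends on the values of
`D` at the generators and finitely many cosets only, so that it can be computed in a wreath product
over any quotient `f` of the coset space that is injective on these finitely many cosets. -/
theorem exists_finset_cocycle_approx.{u} {β : Type*} {A : Type*} [CommGroup A]
    (K : Subgroup (FreeGroup β)) (D : FreeGroup β → FreeGroup β ⧸ K → A)
    (hD : ∀ g h x, D (g * h) x = D g x * D h (g⁻¹ • x))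
    (w : FreeGroup β) : ∀ t : FreeGroup β ⧸ K, ∃ T : Finset (FreeGroup β ⧸ K),
      ∀ (P X : Type u) [Group P] [MulAction P X] (π : FreeGroup β →* P)
        (f : FreeGroup β ⧸ K → X) (s : X → FreeGroup β ⧸ K),
        (∀ g t, f (g • t) = π g • f t) → (∀ t ∈ T, s (f t) = t) →
        (FreeGroup.lift (fun b => (⟨fun x => D (.of b) (s x), π (.of b)⟩ :
          (X → A) ⋊[mulAutArrow] P)) w).left (f t) = D w t := by
  classical
  have right_eq : ∀ (P X : Type u) [Group P] [MulAction P X] (π : FreeGroup β →* P)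
      (s : X → FreeGroup β ⧸ K) (g : FreeGroup β),
      (FreeGroup.lift (fun b => (⟨fun x => D (.of b) (s x), π (.of b)⟩ :
          (X → A) ⋊[mulAutArrow] P)) g).right = π g := by
    intro P X _ _ π s g
    rw [← SemidirectProduct.rightHom_eq_right, ← MonoidHom.comp_apply]
    congr 1
    ext b
    simp
  have D_one : ∀ x, D 1 x = 1 := by
    intro x
    simpa using hD 1 1 x
  induction w with
  | C1 => exact fun t => ⟨∅, fun P X _ _ π f s hf hs => by simp [D_one]⟩
  | of b => exact fun t => ⟨{t}, fun P X _ _ π f s hf hs => by simp [hs]⟩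
  | inv_of b ih =>
    intro t
    obtain ⟨T, hT⟩ := ih (FreeGroup.of b • t)
    refine ⟨T, fun P X _ _ π f s hf hs => ?_⟩
    have h := hT P X π f s hf hs
    have h2 := hD (FreeGroup.of b)⁻¹ (FreeGroup.of b) t
    rw [map_inv, SemidirectProduct.inv_left, right_eq]
    simp only [inv_inv, inv_mul_cancel, D_one] at h2
    rw [eq_inv_of_mul_eq_one_left h2.symm, ← h, hf]
    simp only [mulAutArrow_apply_apply_apply, inv_inv, Pi.inv_apply]
  | mul g h ihg ihh =>
    intro t
    obtain ⟨T, hT⟩ := ihg t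
    obtain ⟨T', hT'⟩ := ihh (g⁻¹ • t)
    refine ⟨T ∪ T', fun P X _ _ π f s hf hs => ?_⟩
    have h1 := hT P X π f s hf fun t ht => hs t (by simp [ht])
    have h2 := hT' P X π f s hf fun t ht => hs t (by simp [ht])
    rw [map_mul, SemidirectProduct.mul_left, right_eq, hD, ← h1, ← h2, hf]
    simp only [mulAutArrow_apply_apply_apply, Pi.mul_apply, map_inv]

/-- A nontrivial normal subgroup of a finite `p`-group meets the center nontrivially. -/
theorem IsPGroup.inf_center_ne_bot {p : ℕ} [Fact p.Prime] {G : Type*} [Group G] [Finite G]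
    (hG : IsPGroup p G) (C : Subgroup G) [C.Normal] (hC : C ≠ ⊥) : C ⊓ Subgroup.center G ≠ ⊥ := by
  have hdvd : p ∣ Nat.card C := by
    have := (hG.to_subgroup C).card_eq_or_dvd
    rw [← Subgroup.one_lt_card_iff_ne_bot] at hC
    omega
  have hG' : IsPGroup p (ConjAct G) := hG.of_equiv ConjAct.toConjAct
  obtain ⟨b, hb, hne⟩ := hG'.exists_fixed_point_of_prime_dvd_card_of_fixed_point C hdvd (a := 1)
    (fun g => by simp)
  intro h
  have hb' : (b : G) ∈ C ⊓ Subgroup.center G := by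
    refine ⟨b.2, Subgroup.mem_center_iff.2 fun g => ?_⟩
    have := congrArg Subtype.val (hb (ConjAct.toConjAct g))
    rw [ConjAct.Subgroup.val_conj_smul, ConjAct.smul_def, ConjAct.ofConjAct_toConjAct,
      mul_inv_eq_iff_eq_mul] at this
    exact this
  rw [h, Subgroup.mem_bot] at hb'
  exact hne (Subtype.ext hb'.symm)

/-- Embedding problems with finite `p`-group kernel: if `R` is a retract of a free group `F`, a
partial solution on `R` extends to a solution on `F`. -/
theorem exists_extension_of_retract.{u} {p : ℕ} [Fact p.Prime] {α : Type*} {R : Type*} [Group R]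
    (ι : R →* FreeGroup α) (r : FreeGroup α →* R) (hr : ∀ x, r (ι x) = x)
    {P : Type*} [Group P] (π : FreeGroup α →* P) (G : Type u) [Group G] [Finite G]
    (hG : IsPGroup p G) (q : G →* P) (hq : Function.Surjective q) (σ : R →* G)
    (hσ : ∀ x, q (σ x) = π (ι x)) :
    ∃ τ : FreeGroup α →* G, (∀ g, q (τ g) = π g) ∧ ∀ x, τ (ι x) = σ x := by
  induction hc : Nat.card G using Nat.strong_induction_on generalizing G with
  | _ c ih =>
  by_cases hker : q.ker = ⊥
  · have hinj : Function.Injective q := (MonoidHom.ker_eq_bot_iff q).1 hker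
    let e := MulEquiv.ofBijective q ⟨hinj, hq⟩
    have he : ∀ x, q (e.symm x) = x := fun x => e.apply_symm_apply x
    refine ⟨e.symm.toMonoidHom.comp π, fun g => he _, fun x => hinj ?_⟩
    rw [hσ]
    exact he _
  · have hC := hG.inf_center_ne_bot q.ker hker
    let C := q.ker ⊓ Subgroup.center G
    have hlt : Nat.card (G ⧸ C) < c := by
      rw [← hc, ← Subgroup.index_eq_card, ← C.index_mul_card]
      exact lt_mul_of_one_lt_right (Nat.pos_of_ne_zero C.index_ne_zero_of_finite)
        ((Subgroup.one_lt_card_iff_ne_bot C).2 hC)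
    obtain ⟨S, hS, hS'⟩ := ih _ hlt (G ⧸ C) (hG.to_quotient C)
      (QuotientGroup.lift C q inf_le_left)
      (QuotientGroup.lift_surjective_of_surjective _ _ hq _)
      ((QuotientGroup.mk' C).comp σ) hσ rfl
    choose s hs using fun a => QuotientGroup.mk'_surjective C (S (FreeGroup.of a))
    let S₀ : FreeGroup α →* G := FreeGroup.lift s
    have hS₀ : ∀ g, (S₀ g : G ⧸ C) = S g := by
      intro g
      have : (QuotientGroup.mk' C).comp S₀ = S := by
        ext a
        simpa [S₀] using hs a
      exact DFunLike.congr_fun this g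
    have hmem : ∀ x, σ x * (S₀ (ι x))⁻¹ ∈ C := by
      intro x
      rw [← QuotientGroup.eq_one_iff, QuotientGroup.mk_mul, QuotientGroup.mk_inv, hS₀, hS']
      simp
    have hcomm : ∀ x g, g * (σ x * (S₀ (ι x))⁻¹) = σ x * (S₀ (ι x))⁻¹ * g := fun x =>
      Subgroup.mem_center_iff.1 (hmem x).2
    refine ⟨MonoidHom.mk' (fun g => σ (r g) * (S₀ (ι (r g)))⁻¹ * S₀ g) fun g h => ?_,
      fun g => ?_, fun x => ?_⟩
    · have h1 := hcomm (r h) (S₀ (ι (r g)))⁻¹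
      have h2 := hcomm (r h) (S₀ g)
      calc _ = σ (r g) * ((σ (r h) * (S₀ (ι (r h)))⁻¹) * (S₀ (ι (r g)))⁻¹) * S₀ g * S₀ h := by
            simp only [map_mul, mul_inv_rev, mul_assoc]
        _ = σ (r g) * (S₀ (ι (r g)))⁻¹ * ((σ (r h) * (S₀ (ι (r h)))⁻¹) * S₀ g) * S₀ h := by
            rw [← h1]
            simp only [mul_assoc]
        _ = _ := by
            rw [← h2]
            simp only [mul_assoc]
    · have h1 : q (σ (r g) * (S₀ (ι (r g)))⁻¹) = 1 := (hmem (r g)).1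
      have h2 : q (S₀ g) = π g := by
        rw [← hS, ← hS₀]
        rfl
      simp only [MonoidHom.mk'_apply]
      rw [map_mul, h1, h2, one_mul]
    · simp [hr]

/-- A finite `p`-group with a proper subgroup `L` has a nontrivial homomorphism to `ℤ/p` that kills
`L`. -/
theorem IsPGroup.exists_hom_zmod_of_ne_top {p : ℕ} [Fact p.Prime] {G : Type*} [Group G] [Finite G]
    (hG : IsPGroup p G) (L : Subgroup G) (hL : L ≠ ⊤) :
    ∃ χ : G →* Multiplicative (ZMod p), χ ≠ 1 ∧ ∀ x ∈ L, χ x = 1 := by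
  obtain ⟨M, hM, hLM⟩ := (eq_top_or_exists_le_coatom L).resolve_left hL
  have := hG.isNilpotent
  have hMn : M.Normal :=
    Subgroup.NormalizerCondition.normal_of_coatom M Group.normalizerCondition_of_isNilpotent hM
  have hdvd : p ∣ Nat.card (G ⧸ M) := by
    have := (hG.to_quotient M).card_eq_or_dvd
    rw [← Subgroup.index_eq_card, Subgroup.index_eq_one] at *
    exact this.resolve_left hM.1
  obtain ⟨x, hx⟩ := exists_prime_orderOf_dvd_card' p hdvd
  have hcard : Nat.card (G ⧸ M) = p := by
    rw [← hx, ← Nat.card_zpowers, ← Subgroup.card_top]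
    refine congrArg (fun L : Subgroup (G ⧸ M) => Nat.card L) ?_
    have hle : M ≤ (Subgroup.zpowers x).comap (QuotientGroup.mk' M) := by
      intro g hg
      have : (g : G ⧸ M) = 1 := (QuotientGroup.eq_one_iff g).2 hg
      simp [this]
    obtain ⟨g, rfl⟩ := QuotientGroup.mk_surjective x
    refine (Subgroup.comap_injective (QuotientGroup.mk'_surjective M) ?_).symm
    rw [Subgroup.comap_top]
    refine hM.2 _ (lt_of_le_of_ne hle fun h => ?_)
    have hgM : g ∈ M := h ▸ Subgroup.mem_zpowers _
    rw [(QuotientGroup.eq_one_iff g).2 hgM, orderOf_one] at hx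
    exact (Fact.out : p.Prime).one_lt.ne hx
  let e : G ⧸ M ≃* Multiplicative (ZMod p) := mulEquivOfPrimeCardEq (p := p) hcard (by simp)
  refine ⟨e.toMonoidHom.comp (QuotientGroup.mk' M), fun h => hM.1 ?_, fun x hx => ?_⟩
  · refine eq_top_iff.2 fun g _ => ?_
    have := DFunLike.congr_fun h g
    simpa using this
  · simpa using hLM hx

theorem pow_index_inf {p : ℕ} (hp : p.Prime) {G : Type*} [Group G] {N M : Subgroup G}
    (hNn : N.Normal) (hN : ∃ k : ℕ, N.index = p ^ k) (hM : ∃ k : ℕ, M.index = p ^ k) :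
    ∃ k : ℕ, (N ⊓ M).index = p ^ k := by
  obtain ⟨k, hk⟩ := hN
  obtain ⟨l, hl⟩ := hM
  have h : (N ⊓ M).index ∣ p ^ (k + l) := by
    rw [← Subgroup.relIndex_mul_index (inf_le_right : N ⊓ M ≤ M), Subgroup.inf_relIndex_right,
      pow_add, ← hk, ← hl]
    exact mul_dvd_mul (Subgroup.relIndex_dvd_index_of_normal N M) dvd_rfl
  obtain ⟨j, -, hj⟩ := (Nat.dvd_prime_pow hp).1 h
  exact ⟨j, hj⟩

theorem IsPGroup.exists_index_ker_eq_pow {p : ℕ} [Fact p.Prime] {G P : Type*} [Group G] [Group P]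
    [Finite P] (hP : IsPGroup p P) (f : G →* P) : ∃ k : ℕ, f.ker.index = p ^ k := by
  rw [Subgroup.index_ker]
  exact IsPGroup.iff_card.1 (hP.to_subgroup _)

theorem mem_proPClosure {p : ℕ} {G : Type*} [Group G] {H : Subgroup G} {g : G} :
    g ∈ proPClosure p H ↔
      ∀ N : Subgroup G, N.Normal → (∃ k : ℕ, N.index = p ^ k) → g ∈ H ⊔ N := by
  simp [proPClosure, Subgroup.mem_iInf]

theorem exists_normal_separating {p : ℕ} (hp : p.Prime) {G : Type*} [Group G] {H : Subgroup G}
    (hH : proPClosure p H = H) (T : Finset G) (hT : ∀ g ∈ T, g ∉ H) :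
    ∃ N : Subgroup G, N.Normal ∧ (∃ k : ℕ, N.index = p ^ k) ∧ ∀ g ∈ T, g ∉ H ⊔ N := by
  classical
  induction T using Finset.induction_on with
  | empty => exact ⟨⊤, inferInstance, ⟨0, by simp⟩, by simp⟩
  | insert g T _ ih =>
    obtain ⟨N, hNn, hN, hNT⟩ := ih fun x hx => hT x (by simp [hx])
    have hg : g ∉ proPClosure p H := hH.symm ▸ hT g (by simp)
    rw [mem_proPClosure] at hg
    push Not at hg
    obtain ⟨M, hMn, hM, hgM⟩ := hg
    refine ⟨N ⊓ M, inferInstance, pow_index_inf hp hNn hN hM, fun x hx => ?_⟩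
    rcases Finset.mem_insert.1 hx with rfl | hx
    · exact fun h => hgM ((sup_le_sup_left (inf_le_right : N ⊓ M ≤ M) H) h)
    · exact fun h => hNT x hx ((sup_le_sup_left (inf_le_left : N ⊓ M ≤ N) H) h)

theorem mk_mem_map_mk'_iff {G : Type*} [Group G] (H N : Subgroup G) [N.Normal] (g : G) :
    (g : G ⧸ N) ∈ H.map (QuotientGroup.mk' N) ↔ g ∈ H ⊔ N := by
  rw [sup_comm, ← QuotientGroup.comap_map_mk', Subgroup.mem_comap, QuotientGroup.mk'_apply]

/-- If `H` is closed, then any homomorphism from the preimage of `H` in a free group to an abelian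
group agrees, on a given finite set, with one obtained from a wreath product over a finite
`p`-quotient. -/
theorem exists_hom_wreath.{u} {p : ℕ} (hp : p.Prime) {G : Type u} [Group G] {β A : Type*}
    [CommGroup A] (ι : FreeGroup β →* G) {H : Subgroup G} (hH : proPClosure p H = H)
    (φ : H.comap ι →* A) (S : Finset (H.comap ι)) :
    ∃ (N : Subgroup G) (_ : N.Normal), (∃ k : ℕ, N.index = p ^ k) ∧
      ∃ σ : FreeGroup β →*
          ((G ⧸ N) ⧸ H.map (QuotientGroup.mk' N) → A) ⋊[mulAutArrow] (G ⧸ N),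
        (∀ x, (σ x).right = (ι x : G ⧸ N)) ∧
        ∀ v ∈ S, (σ v).left (((1 : G) : G ⧸ N) : (G ⧸ N) ⧸ H.map (QuotientGroup.mk' N)) = φ v := by
  classical
  obtain ⟨D, hD, hDφ⟩ := exists_coinduced_cocycle (H.comap ι) φ
  choose T hT using fun v : H.comap ι => exists_finset_cocycle_approx.{u} (H.comap ι) D hD v
    ((1 : FreeGroup β) : FreeGroup β ⧸ H.comap ι)
  let U := S.biUnion T
  let sep : Finset G := ((U ×ˢ U).image fun x => ι (x.1.out⁻¹ * x.2.out)).filter (· ∉ H)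
  obtain ⟨N, hNn, hN, hNsep⟩ := exists_normal_separating hp hH sep (by simp [sep])
  let L := H.map (QuotientGroup.mk' N)
  let π : FreeGroup β →* G ⧸ N := (QuotientGroup.mk' N).comp ι
  have hKL : H.comap ι ≤ L.comap π := fun x hx => ⟨ι x, hx, rfl⟩
  let f : FreeGroup β ⧸ H.comap ι → (G ⧸ N) ⧸ L :=
    Quotient.map' π fun x y hxy => by
      rw [QuotientGroup.leftRel_apply] at hxy ⊢
      simpa using hKL hxy
  have hf : ∀ g t, f (g • t) = π g • f t := by
    intro g t
    induction t using QuotientGroup.induction_on with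
    | H t => exact congrArg _ (map_mul π g t)
  have hinj : Set.InjOn f U := by
    intro s hs t ht hst
    by_contra hne
    have hnot : ι (s.out⁻¹ * t.out) ∉ H := by
      intro h
      apply hne
      rw [← QuotientGroup.out_eq' s, ← QuotientGroup.out_eq' t]
      exact QuotientGroup.eq.2 h
    apply hNsep (ι (s.out⁻¹ * t.out))
    · simp only [sep, Finset.mem_filter, Finset.mem_image]
      exact ⟨⟨(s, t), by simpa using ⟨hs, ht⟩, rfl⟩, hnot⟩
    · rw [← mk_mem_map_mk'_iff]
      rw [← QuotientGroup.out_eq' s, ← QuotientGroup.out_eq' t] at hst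
      have := QuotientGroup.eq.1 (show ((π s.out : G ⧸ N) : (G ⧸ N) ⧸ L) = (π t.out : G ⧸ N)
        from hst)
      rw [← map_inv, ← map_mul] at this
      exact this
  let s := Function.invFunOn f U
  have hs : ∀ t ∈ U, s (f t) = t := fun t ht => hinj.leftInvOn_invFunOn ht
  refine ⟨N, hNn, hN, FreeGroup.lift (fun b => ⟨fun x => D (.of b) (s x), π (.of b)⟩),
    fun x => ?_, fun v hv => ?_⟩
  · rw [← SemidirectProduct.rightHom_eq_right, ← MonoidHom.comp_apply]
    change _ = π x
    congr 1
    ext b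
    simp
  · rw [← hDφ, ← hT v (G ⧸ N) ((G ⧸ N) ⧸ L) π f s hf
      fun t ht => hs t (Finset.mem_biUnion.2 ⟨v, hv, ht⟩)]
    exact congrArg _ (congrArg _ (map_one π).symm)

theorem finite_and_isPGroup_wreath {p : ℕ} [Fact p.Prime] {G : Type*} [Group G] (N : Subgroup G)
    [N.Normal] (hN : ∃ k : ℕ, N.index = p ^ k) (L : Subgroup (G ⧸ N)) :
    Finite (((G ⧸ N) ⧸ L → Multiplicative (ZMod p)) ⋊[mulAutArrow] (G ⧸ N)) ∧
    IsPGroup p (((G ⧸ N) ⧸ L → Multiplicative (ZMod p)) ⋊[mulAutArrow] (G ⧸ N)) := by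
  obtain ⟨k, hk⟩ := hN
  have hfin : Finite (G ⧸ N) := by
    refine Nat.finite_of_card_ne_zero ?_
    rw [← Subgroup.index_eq_card, hk]
    exact pow_ne_zero _ (Fact.out : p.Prime).ne_zero
  refine ⟨Finite.of_equiv _ SemidirectProduct.equivProd.symm, ?_⟩
  refine IsPGroup.of_card (n := Nat.card ((G ⧸ N) ⧸ L) + k) ?_
  rw [SemidirectProduct.card, Nat.card_fun, ← Subgroup.index_eq_card N, hk, pow_add]
  simp

/-- Free groups are residually finite-`p`. -/
theorem FreeGroup.exists_normal_notMem {p : ℕ} (hp : p.Prime) {α : Type*} {g : FreeGroup α}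
    (hg : g ≠ 1) : ∃ N : Subgroup (FreeGroup α), N.Normal ∧ (∃ k : ℕ, N.index = p ^ k) ∧ g ∉ N := by
  have := Fact.mk hp
  by_contra! hcon
  let Z : Subgroup (FreeGroup α) := proPClosure p ⊥
  have hZ : ∀ x, x ∈ Z ↔ ∀ N : Subgroup (FreeGroup α), N.Normal → (∃ k : ℕ, N.index = p ^ k) →
      x ∈ N := by
    simp [Z, mem_proPClosure]
  have hZcl : proPClosure p Z = Z := by
    ext x
    rw [hZ, mem_proPClosure]
    refine forall₃_congr fun N hNn hN => ?_
    rw [sup_eq_right.2 fun z hz => (hZ z).1 hz N hNn hN]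
  let K := Z.comap (MonoidHom.id (FreeGroup α))
  obtain ⟨b⟩ : Nonempty (IsFreeGroup.Generators K) := by
    by_contra hempty
    rw [not_nonempty_iff] at hempty
    have hsub : Subsingleton K := (IsFreeGroup.toFreeGroup K).toEquiv.subsingleton
    have hgK : g ∈ K := (hZ g).2 hcon
    exact hg (congrArg Subtype.val (Subsingleton.elim (⟨g, hgK⟩ : K) 1))
  let φ : K →* Multiplicative (ZMod p) := IsFreeGroup.lift fun _ => Multiplicative.ofAdd 1
  have hφ : φ (IsFreeGroup.of b) ≠ 1 := by
    simp only [φ, IsFreeGroup.lift_of]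
    exact fun h => one_ne_zero (Multiplicative.ofAdd.injective h)
  obtain ⟨N, hNn, hN, σ, -, hσ⟩ := exists_hom_wreath hp (MonoidHom.id (FreeGroup α)) hZcl φ
    {IsFreeGroup.of b}
  obtain ⟨hfin, hpG⟩ := finite_and_isPGroup_wreath N hN (Z.map (QuotientGroup.mk' N))
  have hker : (IsFreeGroup.of b : K).1 ∈ σ.ker :=
    (hZ _).1 (IsFreeGroup.of b : K).2 _ inferInstance (hpG.exists_index_ker_eq_pow σ)
  apply hφ
  rw [← hσ _ (Finset.mem_singleton_self _), MonoidHom.mem_ker.1 hker]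
  simp

/-- Retracts of free groups are closed in the pro-`p` topology. -/
theorem exists_normal_notMem_sup_of_isRetract {p : ℕ} (hp : p.Prime) {α : Type*}
    {R : Subgroup (FreeGroup α)} (hR : IsRetract R) {g : FreeGroup α} (hg : g ∉ R) :
    ∃ N : Subgroup (FreeGroup α), N.Normal ∧ (∃ k : ℕ, N.index = p ^ k) ∧ g ∉ R ⊔ N := by
  have := Fact.mk hp
  obtain ⟨r, hr, hid⟩ := hR
  have hne : (r g)⁻¹ * g ≠ 1 := by
    intro h
    rw [inv_mul_eq_one] at h
    exact hg (hr ▸ ⟨g, h⟩)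
  obtain ⟨N, hNn, hN, hgN⟩ := FreeGroup.exists_normal_notMem hp hne
  have hN' : ∃ k : ℕ, (N.comap r).index = p ^ k := by
    obtain ⟨k, hk⟩ := hN
    have hdvd : (N.comap r).index ∣ p ^ k := by
      rw [Subgroup.index_comap, ← hk]
      exact Subgroup.relIndex_dvd_index_of_normal _ _
    obtain ⟨j, -, hj⟩ := (Nat.dvd_prime_pow hp).1 hdvd
    exact ⟨j, hj⟩
  refine ⟨N ⊓ N.comap r, inferInstance, pow_index_inf hp hNn hN hN', fun h => hgN ?_⟩
  obtain ⟨x, hx, y, hy, rfl⟩ := (Subgroup.mem_sup_of_normal_right).1 h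
  rw [map_mul, hid x hx, mul_inv_rev, mul_assoc, inv_mul_cancel_left]
  exact N.mul_mem (N.inv_mem hy.2) hy.1

/-- Let `R` be a retract of a free group and `H` a closed subgroup. On any finite set, a
homomorphism from `H ∩ R` to `ℤ/p` agrees with the restriction of one from `H`. -/
theorem exists_hom_extension {p : ℕ} (hp : p.Prime) {α β : Type*}
    (ι : FreeGroup β →* FreeGroup α) (r : FreeGroup α →* FreeGroup β) (hr : ∀ x, r (ι x) = x)
    {H : Subgroup (FreeGroup α)} (hH : proPClosure p H = H)
    (φ : H.comap ι →* Multiplicative (ZMod p)) (S : Finset (H.comap ι)) :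
    ∃ ψ : H →* Multiplicative (ZMod p), ∀ v ∈ S, ψ ⟨ι v, v.2⟩ = φ v := by
  have := Fact.mk hp
  obtain ⟨N, hNn, hN, σ, hσr, hσ⟩ := exists_hom_wreath hp ι hH φ S
  obtain ⟨hfin, hpG⟩ := finite_and_isPGroup_wreath N hN (H.map (QuotientGroup.mk' N))
  obtain ⟨τ, hτr, hτ⟩ := exists_extension_of_retract ι r hr (QuotientGroup.mk' N) _ hpG
    SemidirectProduct.rightHom SemidirectProduct.rightHom_surjective σ hσr
  refine ⟨MonoidHom.mk' (fun h => (τ h).left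
    (((1 : FreeGroup α) : FreeGroup α ⧸ N) : _ ⧸ H.map (QuotientGroup.mk' N))) fun g h => ?_,
    fun v hv => ?_⟩
  · have hg : (τ g).right⁻¹ • (((1 : FreeGroup α) : FreeGroup α ⧸ N) :
        _ ⧸ H.map (QuotientGroup.mk' N)) = ((1 : FreeGroup α) : FreeGroup α ⧸ N) := by
      rw [← SemidirectProduct.rightHom_eq_right, hτr, MulAction.Quotient.smul_mk, QuotientGroup.eq]
      simpa using ⟨_, g.2, rfl⟩
    rw [Subgroup.coe_mul, map_mul, SemidirectProduct.mul_left, Pi.mul_apply,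
      mulAutArrow_apply_apply_apply, hg]
  · rw [← hσ v hv, ← hτ]
    rfl

/-- A free group of rank `m` has at most `p ^ m` homomorphisms to `ℤ/p`. -/
theorem HasFreeRank.finite_hom_and_card_le {p : ℕ} [NeZero p] {G : Type*} [Group G]
    {H : Subgroup G} {m : ℕ} (hH : HasFreeRank H m) :
    Finite (H →* Multiplicative (ZMod p)) ∧ Nat.card (H →* Multiplicative (ZMod p)) ≤ p ^ m := by
  obtain ⟨θ, hθ, rfl⟩ := hH
  let res : (θ.range →* Multiplicative (ZMod p)) → Fin m → Multiplicative (ZMod p) :=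
    fun ψ i => ψ (θ.rangeRestrict (.of i))
  have hres : Function.Injective res := by
    intro ψ ψ' h
    have h' : ψ.comp θ.rangeRestrict = ψ'.comp θ.rangeRestrict := by
      ext i
      exact congrFun h i
    exact (MonoidHom.cancel_right θ.rangeRestrict_surjective).1 h'
  refine ⟨Finite.of_injective res hres, (Nat.card_le_card_of_injective res hres).trans ?_⟩
  rw [Nat.card_fun]
  simp

/-- A subgroup `H` of a free group whose homomorphisms to `ℤ/p` are determined by their restriction
to `H ∩ R`, for a retract `R`, is contained in `R`. -/
theorem le_of_isRetract_of_hom_eq_one {p : ℕ} (hp : p.Prime) {α : Type*}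
    {R H : Subgroup (FreeGroup α)} (hR : IsRetract R)
    (hinj : ∀ ψ : H →* Multiplicative (ZMod p), (∀ x : H, (x : FreeGroup α) ∈ R → ψ x = 1) →
      ψ = 1) : H ≤ R := by
  have := Fact.mk hp
  intro h hh
  by_contra hhR
  obtain ⟨N, hNn, ⟨k, hk⟩, hhN⟩ := exists_normal_notMem_sup_of_isRetract hp hR hhR
  have hfin : Finite (FreeGroup α ⧸ N) := by
    refine Nat.finite_of_card_ne_zero ?_
    rw [← Subgroup.index_eq_card, hk]
    exact pow_ne_zero _ hp.ne_zero
  have hP : IsPGroup p (FreeGroup α ⧸ N) := IsPGroup.of_card (n := k) (by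
    rw [← Subgroup.index_eq_card, hk])
  let f : H →* FreeGroup α ⧸ N := (QuotientGroup.mk' N).comp H.subtype
  let L : Subgroup f.range := (R.map (QuotientGroup.mk' N)).subgroupOf f.range
  have hL : L ≠ ⊤ := by
    intro hL
    have : f.rangeRestrict ⟨h, hh⟩ ∈ L := hL ▸ Subgroup.mem_top _
    exact hhN ((mk_mem_map_mk'_iff R N h).1 (Subgroup.mem_subgroupOf.1 this))
  obtain ⟨χ, hχ, hχL⟩ := (hP.to_subgroup f.range).exists_hom_zmod_of_ne_top L hL
  refine hχ ((MonoidHom.cancel_right f.rangeRestrict_surjective).1 ?_)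
  exact hinj _ fun x hx => hχL _ (Subgroup.mem_subgroupOf.2 ⟨x, hx, rfl⟩)

theorem rank_drop_of_proP_closed {n : ℕ} (hn : 2 ≤ n) (p : ℕ) (hp : p.Prime)
    (R H : Subgroup (FreeGroup (Fin n))) (hR : IsRetract R)
    (m : ℕ) (hH : HasFreeRank H m) (hclosed : proPClosure p H = H) :
    H ≤ R ∨ ∃ j < m, HasFreeRank (H ⊓ R) j := by
  have := Fact.mk hp
  obtain ⟨r, hr, hid⟩ := id hR
  let e := IsFreeGroup.toFreeGroup R
  let ι : FreeGroup (IsFreeGroup.Generators R) →* FreeGroup (Fin n) :=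
    R.subtype.comp e.symm.toMonoidHom
  have hι : Function.Injective ι := R.subtype_injective.comp e.symm.injective
  have hιrange : ι.range = R := by
    rw [MonoidHom.range_comp, MonoidHom.range_eq_top.2 e.symm.surjective, ← MonoidHom.range_eq_map,
      Subgroup.range_subtype]
  let r' : FreeGroup (Fin n) →* FreeGroup (IsFreeGroup.Generators R) :=
    e.toMonoidHom.comp (r.codRestrict R fun x => hr ▸ ⟨x, rfl⟩)
  have hr' : ∀ x, r' (ι x) = x := by
    intro x
    have : r.codRestrict R (fun x => hr ▸ ⟨x, rfl⟩) (ι x) = e.symm x :=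
      Subtype.ext (hid _ (e.symm x).2)
    simp only [r', MonoidHom.comp_apply, this]
    exact e.apply_symm_apply x
  let K := H.comap ι
  obtain ⟨hfin, hcard⟩ := hH.finite_hom_and_card_le (p := p)
  let res (s : Finset (IsFreeGroup.Generators K)) (ψ : H →* Multiplicative (ZMod p)) (i : s) :
      Multiplicative (ZMod p) := ψ ⟨ι (IsFreeGroup.of i.1 : K), (IsFreeGroup.of i.1 : K).2⟩
  have hres : ∀ s, Function.Surjective (res s) := by
    classical
    intro s a
    let φ : K →* Multiplicative (ZMod p) :=
      IsFreeGroup.lift fun i => if hi : i ∈ s then a ⟨i, hi⟩ else 1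
    obtain ⟨ψ, hψ⟩ := exists_hom_extension hp ι r' hr' hclosed φ (s.image IsFreeGroup.of)
    refine ⟨ψ, funext fun i => ?_⟩
    rw [show res s ψ i = _ from hψ _ (Finset.mem_image_of_mem _ i.2)]
    simp [φ]
  have hcard_fun : ∀ s : Finset (IsFreeGroup.Generators K),
      Nat.card (s → Multiplicative (ZMod p)) = p ^ s.card := by
    intro s
    rw [Nat.card_fun]
    simp
  have hle : ∀ s : Finset (IsFreeGroup.Generators K), s.card ≤ m := by
    intro s
    rw [← Nat.pow_le_pow_iff_right hp.one_lt, ← hcard_fun]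
    exact (Nat.card_le_card_of_surjective _ (hres s)).trans hcard
  have hfinite : Finite (IsFreeGroup.Generators K) := by
    by_contra hinf
    rw [not_finite_iff_infinite] at hinf
    obtain ⟨s, hs⟩ := Infinite.exists_subset_card_eq (IsFreeGroup.Generators K) (m + 1)
    have := hle s
    omega
  have := Fintype.ofFinite (IsFreeGroup.Generators K)
  have hrank : HasFreeRank (H ⊓ R) (Fintype.card (IsFreeGroup.Generators K)) := by
    let E : FreeGroup (Fin (Fintype.card (IsFreeGroup.Generators K))) ≃* K :=
      (FreeGroup.freeGroupCongr (Fintype.equivFin _).symm).trans (IsFreeGroup.toFreeGroup K).symm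
    refine ⟨ι.comp (K.subtype.comp E.toMonoidHom),
      hι.comp (K.subtype_injective.comp E.injective), ?_⟩
    rw [MonoidHom.range_comp, MonoidHom.range_comp, MonoidHom.range_eq_top.2 E.surjective,
      ← MonoidHom.range_eq_map, Subgroup.range_subtype, Subgroup.map_comap_eq, hιrange, inf_comm]
  rcases (hle Finset.univ).lt_or_eq with hlt | heq
  · exact Or.inr ⟨_, hlt, hrank⟩
  · refine Or.inl (le_of_isRetract_of_hom_eq_one hp hR fun ψ hψ => ?_)
    have hbij := (hres Finset.univ).bijective_of_nat_card_le (by rwa [hcard_fun, heq])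
    refine hbij.1 (funext fun i => ?_)
    exact hψ _ (hιrange.le ⟨(IsFreeGroup.of i.1 : K), rfl⟩)
end

section
/- Every retract of a free group F_n is closed in the pro-p topology of F_n for every prime p. -/
/-- Every element of a free group is a product of syllables `x ^ e` with `e ≠ 0` in which
neighbouring syllables involve distinct generators. -/
theorem FreeGroup.exists_syllables {α : Type*} (g : FreeGroup α) :
    ∃ l : List (α × ℤ), l.IsChain (fun s t => s.1 ≠ t.1) ∧ (∀ s ∈ l, s.2 ≠ 0) ∧
      (l.map fun s => FreeGroup.of s.1 ^ s.2).prod = g := by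
  classical
  have key : ∀ (x : α) (e : ℤ), e ≠ 0 → ∀ g : FreeGroup α,
      (∃ l : List (α × ℤ), l.IsChain (fun s t => s.1 ≠ t.1) ∧ (∀ s ∈ l, s.2 ≠ 0) ∧
        (l.map fun s => FreeGroup.of s.1 ^ s.2).prod = g) →
      ∃ l : List (α × ℤ), l.IsChain (fun s t => s.1 ≠ t.1) ∧ (∀ s ∈ l, s.2 ≠ 0) ∧
        (l.map fun s => FreeGroup.of s.1 ^ s.2).prod = FreeGroup.of x ^ e * g := by
    rintro x e he _ ⟨l, hc, hl, rfl⟩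
    match l, hc, hl with
    | [], _, _ => exact ⟨[(x, e)], by simp, by simpa using he, by simp⟩
    | (y, f) :: l, hc, hl =>
      by_cases hxy : x = y
      · subst hxy
        by_cases hef : e + f = 0
        · refine ⟨l, hc.tail, fun s hs => hl s (List.mem_cons_of_mem _ hs), ?_⟩
          rw [List.map_cons, List.prod_cons, ← mul_assoc, ← zpow_add, hef, zpow_zero, one_mul]
        · refine ⟨(x, e + f) :: l, ?_, ?_, ?_⟩
          · cases l with
            | nil => simp
            | cons t l => simpa [List.isChain_cons_cons] using hc
          · intro s hs
            rcases List.mem_cons.1 hs with rfl | hs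
            · exact hef
            · exact hl s (List.mem_cons_of_mem _ hs)
          · simp [zpow_add, mul_assoc]
      · refine ⟨(x, e) :: (y, f) :: l, List.isChain_cons_cons.2 ⟨hxy, hc⟩, ?_, by simp⟩
        intro s hs
        rcases List.mem_cons.1 hs with rfl | hs
        · exact he
        · exact hl s hs
  have all : ∀ h g : FreeGroup α,
      (∃ l : List (α × ℤ), l.IsChain (fun s t => s.1 ≠ t.1) ∧ (∀ s ∈ l, s.2 ≠ 0) ∧
        (l.map fun s => FreeGroup.of s.1 ^ s.2).prod = g) →
      ∃ l : List (α × ℤ), l.IsChain (fun s t => s.1 ≠ t.1) ∧ (∀ s ∈ l, s.2 ≠ 0) ∧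
        (l.map fun s => FreeGroup.of s.1 ^ s.2).prod = h * g := by
    intro h
    induction h using FreeGroup.induction_on with
    | C1 => intro g hg; simpa using hg
    | of x => intro g hg; simpa using key x 1 one_ne_zero g hg
    | inv_of x _ => intro g hg; simpa using key x (-1) (by decide) g hg
    | mul a b ha hb => intro g hg; rw [mul_assoc]; exact ha _ (hb _ hg)
  simpa using all g 1 ⟨[], by simp, by simp, by simp⟩

/-- In a ring where `p ^ s = 0`, a unipotent element has `p`-power order. -/
theorem exists_one_add_pow_prime_pow_eq_one {A : Type*} [Ring A] {p s : ℕ} (hp : p.Prime)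
    (hs : (p : A) ^ s = 0) {a : A} (ha : IsNilpotent a) : ∃ t : ℕ, (1 + a) ^ p ^ t = 1 := by
  obtain ⟨m, hm⟩ := ha
  have : Fact p.Prime := ⟨hp⟩
  have hdvd : (p : Polynomial ℤ) ∣ (1 + Polynomial.X) ^ p ^ m - (1 + Polynomial.X ^ p ^ m) := by
    obtain ⟨r, hr⟩ := exists_add_pow_prime_pow_eq hp (1 : Polynomial ℤ) Polynomial.X m
    exact ⟨_, by rw [hr, one_pow, add_sub_cancel_left]; simp only [mul_assoc]; rfl⟩
  obtain ⟨q, hq⟩ := dvd_sub_pow_of_dvd_sub hdvd s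
  have := congrArg (Polynomial.aeval a) hq
  have hm' : a ^ p ^ m = 0 := pow_eq_zero_of_le (Nat.lt_pow_self hp.one_lt).le hm
  refine ⟨m + s, ?_⟩
  simpa [hm', pow_succ, hs, ← pow_mul, ← pow_add, sub_eq_zero] using this

/-- A square matrix is `m`-banded when its entries vanish below the `m`-th superdiagonal. -/
def Matrix.IsBanded {R : Type*} [Zero R] {k : ℕ} (m : ℕ) (M : Matrix (Fin k) (Fin k) R) : Prop :=
  ∀ i j : Fin k, (j : ℕ) < i + m → M i j = 0

theorem Matrix.IsBanded.mul {R : Type*} [Ring R] {k a b : ℕ} {M N : Matrix (Fin k) (Fin k) R}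
    (hM : M.IsBanded a) (hN : N.IsBanded b) : (M * N).IsBanded (a + b) := by
  intro i j hij
  rw [Matrix.mul_apply]
  refine Finset.sum_eq_zero fun c _ => ?_
  by_cases hc : (c : ℕ) < i + a
  · rw [hM i c hc, zero_mul]
  · rw [hN c j (by omega), mul_zero]

theorem Matrix.IsBanded.isNilpotent {R : Type*} [Ring R] {k : ℕ} {M : Matrix (Fin k) (Fin k) R}
    (hM : M.IsBanded 1) : IsNilpotent M := by
  have h : ∀ m, (M ^ m).IsBanded m := by
    intro m
    induction m with
    | zero =>
      intro i j hij
      rw [pow_zero, Matrix.one_apply_ne (by rintro rfl; omega)]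
    | succ m ih => rw [pow_succ]; exact ih.mul hM
  exact ⟨k, by ext i j; exact h k i j (by omega)⟩

section SyllableMatrix

variable {α : Type*} [DecidableEq α] (R : Type*) [CommRing R] (l : List (α × ℤ))

/-- The matrix with a `1` at position `(r, r + 1)` whenever the `r`-th syllable of `l` is a power
of `x`, and zeros elsewhere. -/
def syllableMatrix (x : α) : Matrix (Fin (l.length + 1)) (Fin (l.length + 1)) R :=
  fun r c => if (c : ℕ) = r + 1 ∧ l[(r : ℕ)]?.map Prod.fst = some x then 1 else 0

theorem syllableMatrix_isBanded (x : α) : (syllableMatrix R l x).IsBanded 1 :=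
  fun _ _ h => if_neg fun h' => by omega

variable {l}

theorem syllableMatrix_mul_self (hl : l.IsChain (fun s t => s.1 ≠ t.1)) (x : α) :
    syllableMatrix R l x * syllableMatrix R l x = 0 := by
  ext r c
  rw [Matrix.mul_apply]
  refine Finset.sum_eq_zero fun m _ => ?_
  unfold syllableMatrix
  split_ifs with h₁ h₂
  · exfalso
    obtain ⟨hm, hr⟩ := h₁
    obtain ⟨-, hm'⟩ := h₂
    rw [hm] at hm'
    simp only [Option.map_eq_some_iff, List.getElem?_eq_some_iff] at hr hm'
    obtain ⟨s, ⟨h₁, rfl⟩, hs⟩ := hr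
    obtain ⟨t, ⟨h₂, rfl⟩, ht⟩ := hm'
    exact List.isChain_iff_getElem.1 hl r h₂ (hs.trans ht.symm)
  all_goals simp

/-- The unit `1 + syllableMatrix R l x`. -/
def syllableUnit (hl : l.IsChain (fun s t => s.1 ≠ t.1)) (x : α) :
    (Matrix (Fin (l.length + 1)) (Fin (l.length + 1)) R)ˣ where
  val := 1 + syllableMatrix R l x
  inv := 1 - syllableMatrix R l x
  val_inv := by simp [mul_sub, add_mul, syllableMatrix_mul_self R hl]
  inv_val := by simp [mul_add, sub_mul, syllableMatrix_mul_self R hl]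

theorem syllableUnit_zpow (hl : l.IsChain (fun s t => s.1 ≠ t.1)) (x : α) (e : ℤ) :
    ((syllableUnit R hl x ^ e : (Matrix _ _ R)ˣ) : Matrix _ _ R) =
      1 + (e : R) • syllableMatrix R l x := by
  have h := syllableMatrix_mul_self R hl x
  have hv : ((syllableUnit R hl x : (Matrix _ _ R)ˣ) : Matrix _ _ R) =
    1 + syllableMatrix R l x := rfl
  have hi : (((syllableUnit R hl x)⁻¹ : (Matrix _ _ R)ˣ) : Matrix _ _ R) =
    1 - syllableMatrix R l x := rfl
  induction e using Int.induction_on with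
  | zero => simp
  | succ n ih =>
    rw [zpow_add_one, Units.val_mul, ih, hv]
    simp only [mul_add, add_mul, smul_mul_assoc, h, mul_one, one_mul, smul_zero]
    push_cast
    module
  | pred n ih =>
    rw [zpow_sub_one, Units.val_mul, ih, hi]
    simp only [mul_sub, add_mul, smul_mul_assoc, h, mul_one, one_mul, smul_zero]
    push_cast
    module

/-- The unitriangular representation of the free group attached to a list of syllables. -/
def syllableRep (hl : l.IsChain (fun s t => s.1 ≠ t.1)) :
    FreeGroup α →* (Matrix (Fin (l.length + 1)) (Fin (l.length + 1)) R)ˣ :=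
  FreeGroup.lift (syllableUnit R hl)

theorem syllableRep_sub_one_isBanded (hl : l.IsChain (fun s t => s.1 ≠ t.1)) (g : FreeGroup α) :
    ((syllableRep R hl g).val - 1).IsBanded 1 := by
  have hgen : ∀ (x : α) (e : ℤ),
      ((syllableRep R hl (FreeGroup.of x ^ e)).val - 1).IsBanded 1 := by
    intro x e i j hij
    rw [map_zpow, syllableRep, FreeGroup.lift_apply_of, syllableUnit_zpow, add_sub_cancel_left,
      Matrix.smul_apply, syllableMatrix_isBanded R l x i j hij, smul_zero]
  induction g using FreeGroup.induction_on with
  | C1 => intro i j _; simp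
  | of x => simpa using hgen x 1
  | inv_of x _ => simpa using hgen x (-1)
  | mul a b ha hb =>
    intro i j hij
    have : (syllableRep R hl (a * b)).val - 1 =
        ((syllableRep R hl a).val - 1) * ((syllableRep R hl b).val - 1) +
          ((syllableRep R hl a).val - 1) + ((syllableRep R hl b).val - 1) := by
      rw [map_mul, Units.val_mul]
      noncomm_ring
    rw [this, Matrix.add_apply, Matrix.add_apply, (ha.mul hb) i j (by omega), ha i j hij,
      hb i j hij, add_zero, add_zero]

theorem syllableRep_take_apply (hl : l.IsChain (fun s t => s.1 ≠ t.1)) (j : ℕ)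
    (hj : j ≤ l.length) (c : Fin (l.length + 1)) (hc : j ≤ c) :
    (syllableRep R hl ((l.take j).map fun s => FreeGroup.of s.1 ^ s.2).prod).val 0 c =
      if (c : ℕ) = j then ((((l.take j).map Prod.snd).prod : ℤ) : R) else 0 := by
  induction j generalizing c with
  | zero =>
    simp only [List.take_zero, List.map_nil, List.prod_nil, map_one, Units.val_one, Int.cast_one,
      Matrix.one_apply]
    exact if_congr (by rw [eq_comm, Fin.ext_iff, Fin.val_zero]) rfl rfl
  | succ j ih =>
    have hjl : j < l.length := hj
    rw [List.take_add_one, List.getElem?_eq_getElem hjl]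
    simp only [Option.toList_some, List.map_append, List.map_cons, List.map_nil, List.prod_append,
      List.prod_singleton]
    rw [map_mul, Units.val_mul, map_zpow, syllableRep, FreeGroup.lift_apply_of, syllableUnit_zpow,
      mul_add, mul_one, Matrix.add_apply, ← syllableRep, ih hjl.le c (by omega),
      if_neg (by omega), zero_add, Matrix.mul_apply,
      Finset.sum_eq_single (⟨(c : ℕ) - 1, by omega⟩ : Fin (l.length + 1)),
      ih hjl.le _ (by simp; omega)]
    · by_cases hcj : (c : ℕ) = j + 1
      · simp [syllableMatrix, hcj, hjl]
      · simp [show ¬ ((c : ℕ) - 1 = j) by omega, hcj]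
    · intro b _ hb
      rw [Matrix.smul_apply, syllableMatrix, if_neg, smul_zero, mul_zero]
      rintro ⟨h, -⟩
      exact hb (Fin.ext (by simp; omega))
    · simp

end SyllableMatrix

/-- Free groups are residually finite-`p`. -/
theorem FreeGroup.exists_hom_pGroup_ne_one {α : Type*} {p : ℕ} (hp : p.Prime) {g : FreeGroup α}
    (hg : g ≠ 1) :
    ∃ (P : Type) (_ : Group P) (_ : Finite P) (φ : FreeGroup α →* P), IsPGroup p P ∧ φ g ≠ 1 := by
  classical
  obtain ⟨l, hl, hne, rfl⟩ := g.exists_syllables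
  set d : ℤ := (l.map Prod.snd).prod with hd
  have hd0 : d ≠ 0 := by
    rw [hd, Ne, List.prod_eq_zero_iff]
    intro h
    obtain ⟨s, hs, hs0⟩ := List.mem_map.1 h
    exact hne s hs hs0
  set s := d.natAbs
  have : NeZero (p ^ s) := ⟨pow_ne_zero _ hp.ne_zero⟩
  have hds : ((d : ℤ) : ZMod (p ^ s)) ≠ 0 := by
    rw [Ne, ZMod.intCast_zmod_eq_zero_iff_dvd]
    intro h
    have := Int.natAbs_dvd_natAbs.2 h
    rw [Int.natAbs_natCast] at this
    exact (Nat.lt_pow_self hp.one_lt).not_ge (Nat.le_of_dvd (Int.natAbs_pos.2 hd0) this)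
  refine ⟨(syllableRep (ZMod (p ^ s)) hl).range, inferInstance, inferInstance,
    (syllableRep (ZMod (p ^ s)) hl).rangeRestrict, ?_, ?_⟩
  · rintro ⟨_, g, rfl⟩
    obtain ⟨t, ht⟩ := exists_one_add_pow_prime_pow_eq_one (s := s) hp
      (A := Matrix (Fin (l.length + 1)) (Fin (l.length + 1)) (ZMod (p ^ s)))
      (by
        have h := congrArg (algebraMap (ZMod (p ^ s))
          (Matrix (Fin (l.length + 1)) (Fin (l.length + 1)) (ZMod (p ^ s))))
          (ZMod.natCast_self (p ^ s))
        simpa only [map_pow, map_natCast, map_zero, Nat.cast_pow] using h)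
      (syllableRep_sub_one_isBanded (ZMod (p ^ s)) hl g).isNilpotent
    refine ⟨t, Subtype.ext (Units.ext ?_)⟩
    simpa using ht
  · intro h
    have h' := congrArg (fun u => u.val.val 0 (Fin.last l.length)) h
    have hcorner := syllableRep_take_apply (ZMod (p ^ s)) hl l.length le_rfl (Fin.last _) (by simp)
    rw [List.take_length] at hcorner
    simp only [MonoidHom.coe_rangeRestrict, hcorner] at h'
    have hlen : l ≠ [] := by rintro rfl; simp at hg
    rw [Fin.val_last, if_pos rfl, OneMemClass.coe_one, Units.val_one,
      Matrix.one_apply_ne (by simpa [Fin.ext_iff, eq_comm] using hlen)] at h'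
    exact hds h'

theorem retract_proP_closed {n : ℕ} (hn : 2 ≤ n) (p : ℕ) (hp : p.Prime)
    (R : Subgroup (FreeGroup (Fin n))) (hR : IsRetract R) :
    proPClosure p R = R := by
  refine le_antisymm (fun x hx => ?_) (le_iInf₂ fun N _ => le_sup_left)
  obtain ⟨r, hr, hfix⟩ := hR
  have hrR : ∀ y, r y ∈ R := fun y => hr ▸ ⟨y, rfl⟩
  by_contra hxR
  have hne : (r x)⁻¹ * x ≠ 1 := fun h => hxR (inv_mul_eq_one.1 h ▸ hrR x)
  obtain ⟨P, _, _, φ, hP, hφ⟩ := FreeGroup.exists_hom_pGroup_ne_one hp hne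
  have : Fact p.Prime := ⟨hp⟩
  set ψ : FreeGroup (Fin n) →* P × P := φ.prod (φ.comp r) with hψ
  have hPP : IsPGroup p (P × P) := by
    obtain ⟨k, hk⟩ := IsPGroup.iff_card.1 hP
    exact IsPGroup.of_card (n := k + k) (by rw [Nat.card_prod, hk, pow_add])
  have hidx : ∃ k : ℕ, ψ.ker.index = p ^ k := by
    rw [Subgroup.index_ker]
    exact IsPGroup.iff_card.1 (hPP.to_subgroup ψ.range)
  have hmem : x ∈ R ⊔ ψ.ker :=
    (Subgroup.mem_iInf.1 (Subgroup.mem_iInf.1 hx ψ.ker)) ⟨inferInstance, hidx⟩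
  obtain ⟨y, hy, z, hz, rfl⟩ := Subgroup.mem_sup_of_normal_right.1 hmem
  obtain ⟨hz₁, hz₂⟩ : φ z = 1 ∧ φ (r z) = 1 := by
    simpa [hψ, MonoidHom.mem_ker, Prod.ext_iff] using hz
  apply hφ
  simp [hfix y hy, hz₁, hz₂]
end

section
/- There exist a free group F of finite rank, a finitely generated subgroup H of F not contained in any proper retract of F, and a test element of H which is not a test element of F. -/
/-- A *test element* of a group `G` is an element fixed only by automorphisms:
every endomorphism of `G` fixing it is bijective. -/
def IsTestElement {G : Type*} [Group G] (g : G) : Prop :=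
  ∀ φ : G →* G, φ g = g → Function.Bijective φ

open Function

section SkewAction

variable {α V G : Type*} [Group G]

/-- The action of a free group on `V × G` in which the generator `x` moves the first coordinate by
`σ x` and multiplies the second one on the left by `c x v`, where `v` is the first coordinate. -/
def skewAction (σ : α → Equiv.Perm V) (c : α → V → G) : FreeGroup α →* Equiv.Perm (V × G) :=
  FreeGroup.lift fun x => Equiv.prodShear (σ x) fun v => Equiv.mulLeft (c x v)

variable (σ : α → Equiv.Perm V) (c : α → V → G)

@[simp]
theorem skewAction_of (x : α) (v : V) (h : G) :
    skewAction σ c (FreeGroup.of x) (v, h) = (σ x v, c x v * h) := by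
  simp [skewAction]

@[simp]
theorem skewAction_of_symm (x : α) (v : V) (h : G) :
    (skewAction σ c (FreeGroup.of x)).symm (v, h) =
      ((σ x).symm v, (c x ((σ x).symm v))⁻¹ * h) := by
  rw [Equiv.symm_apply_eq]
  simp

theorem skewAction_fst (f : FreeGroup α) (v : V) (h : G) :
    (skewAction σ c f (v, h)).1 = FreeGroup.lift σ f v := by
  induction f using FreeGroup.induction_on generalizing v h with
  | C1 => simp
  | of x => simp
  | inv_of x => simp [Equiv.Perm.inv_def]
  | mul f g hf hg =>
    rw [map_mul, map_mul, Equiv.Perm.mul_apply, Equiv.Perm.mul_apply, ← hg v h, ← hf]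

theorem skewAction_mul_right (f : FreeGroup α) (v : V) (h k : G) :
    skewAction σ c f (v, h * k) =
      ((skewAction σ c f (v, h)).1, (skewAction σ c f (v, h)).2 * k) := by
  induction f using FreeGroup.induction_on generalizing v h with
  | C1 => simp
  | of x => simp [mul_assoc]
  | inv_of x => simp [Equiv.Perm.inv_def, mul_assoc]
  | mul f g hf hg =>
    rw [map_mul, Equiv.Perm.mul_apply, Equiv.Perm.mul_apply, hg, hf]

theorem skewAction_snd_mem {L : Subgroup G} (hc : ∀ x v, c x v ∈ L) (f : FreeGroup α) (v : V)
    {h : G} (hh : h ∈ L) : (skewAction σ c f (v, h)).2 ∈ L := by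
  induction f using FreeGroup.induction_on generalizing v h with
  | C1 => simpa
  | of x => simpa using L.mul_mem (hc x v) hh
  | inv_of x => simpa [Equiv.Perm.inv_def] using L.mul_mem (L.inv_mem (hc x _)) hh
  | mul f g hf hg =>
    rw [map_mul, Equiv.Perm.mul_apply]
    exact hf _ (hg v hh)

end SkewAction

section FreeGroupFacts

universe u

variable {α : Type u}

/-- Free groups are residually finite. -/
theorem exists_finite_perm_map_ne_one {w : FreeGroup α} (hw : w ≠ 1) :
    ∃ (S : Type u) (_ : Finite S) (f : FreeGroup α →* Equiv.Perm S), f w ≠ 1 := by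
  classical
  let T : Set (FreeGroup α) := Set.image FreeGroup.mk {l | l ∈ w.toWord.tails}
  have hT : T.Finite := (List.finite_toSet w.toWord.tails).image _
  have : Finite T := hT
  let e (x : α) : {s : T // FreeGroup.of x * s.1 ∈ T} ≃ {s : T // (FreeGroup.of x)⁻¹ * s.1 ∈ T} :=
    { toFun := fun s => ⟨⟨_, s.2⟩, by simp⟩
      invFun := fun s => ⟨⟨_, s.2⟩, by simp⟩
      left_inv := fun s => by simp
      right_inv := fun s => by simp }
  have := Fintype.ofFinite T
  let f : FreeGroup α →* Equiv.Perm T := FreeGroup.lift fun x => (e x).extendSubtype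
  have hf (x : α) (s : T) (hs : FreeGroup.of x * s.1 ∈ T) :
      (f (FreeGroup.of x) s : FreeGroup α) = FreeGroup.of x * s := by
    simp only [f, FreeGroup.lift_apply_of]
    rw [(e x).extendSubtype_apply_of_mem s hs]
    rfl
  have h1 : (1 : FreeGroup α) ∈ T := ⟨[], by simp, rfl⟩
  have key : ∀ l : List (α × Bool), l ∈ w.toWord.tails →
      (f (FreeGroup.mk l) ⟨1, h1⟩ : FreeGroup α) = FreeGroup.mk l := by
    intro l
    induction l with
    | nil =>
      intro _
      rw [← FreeGroup.one_eq_mk, map_one]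
      rfl
    | cons p l ih =>
      intro hl
      have hl' : l ∈ w.toWord.tails := by
        rw [List.mem_tails] at hl ⊢
        exact (List.suffix_cons p l).trans hl
      obtain ⟨x, b⟩ := p
      cases b with
      | true =>
        have : FreeGroup.mk ((x, true) :: l) = FreeGroup.of x * FreeGroup.mk l := rfl
        rw [this, map_mul, Equiv.Perm.mul_apply, hf, ih hl']
        rw [ih hl']
        exact ⟨_, hl, rfl⟩
      | false =>
        have : FreeGroup.mk ((x, false) :: l) = (FreeGroup.of x)⁻¹ * FreeGroup.mk l := rfl
        have hm : (FreeGroup.of x)⁻¹ * FreeGroup.mk l ∈ T := ⟨_, hl, rfl⟩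
        have hstep : f (FreeGroup.of x) ⟨_, hm⟩ = f (FreeGroup.mk l) ⟨1, h1⟩ := by
          ext1
          rw [hf x _ ⟨l, hl', by simp⟩, ih hl', mul_inv_cancel_left]
        rw [this, map_mul, map_inv, Equiv.Perm.mul_apply, ← hstep, Equiv.Perm.inv_def,
          Equiv.symm_apply_apply]
  refine ⟨T, inferInstance, f, fun h => hw ?_⟩
  have := key w.toWord (by simp)
  rw [FreeGroup.mk_toWord, h] at this
  exact this.symm

/-- Free groups of finite rank are Hopfian. -/
theorem freeGroup_injective_of_surjective [Finite α] (ψ : FreeGroup α →* FreeGroup α)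
    (hψ : Surjective ψ) : Injective ψ := by
  rw [injective_iff_map_eq_one]
  intro w hw
  by_contra hne
  obtain ⟨S, hS, f, hf⟩ := exists_finite_perm_map_ne_one hne
  have : Finite (FreeGroup α →* Equiv.Perm S) := Finite.of_equiv _ FreeGroup.lift
  have hinj : Injective fun g : FreeGroup α →* Equiv.Perm S => g.comp ψ :=
    fun g₁ g₂ h => (MonoidHom.cancel_right hψ).1 h
  obtain ⟨g, rfl⟩ := Finite.surjective_of_injective hinj f
  exact hf (by simp [hw])

/-- An endomorphism of a free group of finite rank that is injective on cohomology modulo `2`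
is injective. -/
theorem freeGroup_injective_of_mod_two [Finite α] (φ : FreeGroup α →* FreeGroup α)
    (hφ : ∀ f : FreeGroup α →* Multiplicative (ZMod 2), f.comp φ = 1 → f = 1) :
    Injective φ := by
  obtain ⟨ι, ⟨b⟩⟩ := IsFreeGroup.nonempty_basis (G := φ.range)
  let C := Multiplicative (ZMod 2)
  have hfin : Finite (FreeGroup α →* C) := Finite.of_equiv _ FreeGroup.lift
  have hres : Injective fun f : FreeGroup α →* C => f.comp φ.range.subtype := by
    intro f g h
    have h' : (f / g).comp φ = 1 := by
      ext x
      have := DFunLike.congr_fun h ⟨φ (FreeGroup.of x), _, rfl⟩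
      simp only [MonoidHom.comp_apply, Subgroup.subtype_apply] at this
      simp [MonoidHom.div_apply, this]
    exact div_eq_one.1 (hφ _ h')
  have hext : Injective fun f : φ.range →* C => f.comp φ.rangeRestrict :=
    fun f g h => (MonoidHom.cancel_right φ.rangeRestrict_surjective).1 h
  have hfin' : Finite (φ.range →* C) := Finite.of_injective _ hext
  have hcard : Nat.card (φ.range →* C) = Nat.card (FreeGroup α →* C) :=
    le_antisymm (Nat.card_le_card_of_injective _ hext) (Nat.card_le_card_of_injective _ hres)
  have hι : Finite (ι → C) := Finite.of_equiv _ b.lift.symm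
  have hιfin : Finite ι := by
    by_contra hinf
    rw [not_finite_iff_infinite] at hinf
    exact not_finite (ι → C)
  rw [Nat.card_congr b.lift.symm, Nat.card_congr (FreeGroup.lift (α := α) (β := C)).symm,
    Nat.card_fun, Nat.card_fun] at hcard
  have hC : Nat.card C = 2 := by simp [C]
  rw [hC] at hcard
  obtain ⟨e⟩ := Finite.card_eq.1 (Nat.pow_right_injective le_rfl hcard)
  let θ : φ.range ≃* FreeGroup α := b.repr.trans (FreeGroup.freeGroupCongr e)
  have hinj : Injective (θ.toMonoidHom.comp φ.rangeRestrict) :=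
    freeGroup_injective_of_surjective _ (θ.surjective.comp φ.rangeRestrict_surjective)
  intro x y hxy
  exact hinj (congrArg θ (Subtype.ext hxy : φ.rangeRestrict x = φ.rangeRestrict y))

/-- For a fixed element `u` of a free group, every subgroup `K` containing `u` retracts, by a map
fixing `u`, onto a subgroup generated by a subset of a finite set depending only on `u`. -/
theorem exists_retraction_onto_bounded [Finite α] (u : FreeGroup α) :
    ∃ D : Set (FreeGroup α), D.Finite ∧ ∀ K : Subgroup (FreeGroup α), ∀ hu : u ∈ K,
      ∃ E ⊆ D, Subgroup.closure E ≤ K ∧ ∃ ρ : K →* FreeGroup α, ρ ⟨u, hu⟩ = u ∧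
        (∀ k, ρ k ∈ Subgroup.closure E) ∧ ∀ k : K, (k : FreeGroup α) ∈ Subgroup.closure E →
          ρ k = k := by
  classical
  let T : Set (FreeGroup α) := Set.image FreeGroup.mk {l | l ∈ u.toWord.tails}
  have hT : T.Finite := (List.finite_toSet u.toWord.tails).image _
  have h1 : (1 : FreeGroup α) ∈ T := ⟨[], by simp, rfl⟩
  let D : Set (FreeGroup α) := insert 1
    (Set.image (fun p : FreeGroup α × α × FreeGroup α => p.1⁻¹ * FreeGroup.of p.2.1 * p.2.2)
      (T ×ˢ Set.univ ×ˢ T))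
  refine ⟨D, ((hT.prod (Set.finite_univ.prod hT)).image _).insert 1, fun K hu => ?_⟩
  have hrep : ∀ v : FreeGroup α ⧸ K, ∃ t ∈ T, ((∃ s ∈ T, (s : FreeGroup α ⧸ K) = v) →
      (t : FreeGroup α ⧸ K) = v) ∧ (v = (1 : FreeGroup α) → t = 1) := by
    intro v
    by_cases hv : v = (1 : FreeGroup α)
    · exact ⟨1, h1, fun _ => hv.symm, fun _ => rfl⟩
    · by_cases hs : ∃ s ∈ T, (s : FreeGroup α ⧸ K) = v
      · obtain ⟨s, hsT, hs⟩ := hs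
        exact ⟨s, hsT, fun _ => hs, fun h => absurd h hv⟩
      · exact ⟨1, h1, fun h => absurd h hs, fun h => absurd h hv⟩
  choose t htT htv ht1 using hrep
  have ht1 : t ((1 : FreeGroup α) : FreeGroup α ⧸ K) = 1 := ht1 _ rfl
  let P (x : α) (v : FreeGroup α ⧸ K) : Prop :=
    ∃ s ∈ T, FreeGroup.of x * s ∈ T ∧ (s : FreeGroup α ⧸ K) = v
  let c (x : α) (v : FreeGroup α ⧸ K) : FreeGroup α :=
    if P x v then (t (FreeGroup.of x • v))⁻¹ * FreeGroup.of x * t v else 1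
  let A : FreeGroup α →* Equiv.Perm ((FreeGroup α ⧸ K) × FreeGroup α) :=
    skewAction (fun x => MulAction.toPerm (FreeGroup.of x)) c
  have hA1 (f : FreeGroup α) (v : FreeGroup α ⧸ K) (h : FreeGroup α) : (A f (v, h)).1 = f • v := by
    rw [skewAction_fst]
    have : FreeGroup.lift (fun x => MulAction.toPerm (FreeGroup.of x)) =
        MulAction.toPermHom (FreeGroup α) (FreeGroup α ⧸ K) := by
      ext; simp
    rw [this]
    rfl
  have hAmul (f : FreeGroup α) (v : FreeGroup α ⧸ K) (h k : FreeGroup α) :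
      A f (v, h * k) = ((A f (v, h)).1, (A f (v, h)).2 * k) := skewAction_mul_right _ _ f v h k
  have hAof (x : α) (v : FreeGroup α ⧸ K) (h : FreeGroup α) :
      A (FreeGroup.of x) (v, h) = (FreeGroup.of x • v, c x v * h) := by
    simp [A]
  let o : FreeGroup α ⧸ K := (1 : FreeGroup α)
  have hfix (k : K) : (k : FreeGroup α) • o = o := by
    change (((k : FreeGroup α) * 1 : FreeGroup α) : FreeGroup α ⧸ K) = ((1 : FreeGroup α) : _)
    rw [QuotientGroup.eq]
    simp
  have hedge (x : α) (s : FreeGroup α) (hs : s ∈ T) (hxs : FreeGroup.of x * s ∈ T) :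
      A (FreeGroup.of x) (s, (t s)⁻¹ * s) =
        (((FreeGroup.of x * s : FreeGroup α) : FreeGroup α ⧸ K),
          (t ((FreeGroup.of x * s : FreeGroup α) : FreeGroup α ⧸ K))⁻¹ *
            (FreeGroup.of x * s)) := by
    have hP : P x s := ⟨s, hs, hxs, rfl⟩
    rw [hAof]
    simp only [c, if_pos hP]
    change (_, (t ((FreeGroup.of x * s : FreeGroup α) : FreeGroup α ⧸ K))⁻¹ *
      FreeGroup.of x * t s * ((t s)⁻¹ * s)) = _
    ext1
    · rfl
    · simp only; group
  have hpath : ∀ l : List (α × Bool), l ∈ u.toWord.tails →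
      A (FreeGroup.mk l) (o, 1) = ((FreeGroup.mk l : FreeGroup α ⧸ K),
        (t (FreeGroup.mk l : FreeGroup α ⧸ K))⁻¹ * FreeGroup.mk l) := by
    intro l
    induction l with
    | nil =>
      intro _
      rw [← FreeGroup.one_eq_mk, map_one, ht1]
      simp [o]
    | cons p l ih =>
      intro hl
      have hl' : l ∈ u.toWord.tails := by
        rw [List.mem_tails] at hl ⊢
        exact (List.suffix_cons p l).trans hl
      obtain ⟨x, b⟩ := p
      cases b with
      | true =>
        have : FreeGroup.mk ((x, true) :: l) = FreeGroup.of x * FreeGroup.mk l := rfl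
        have hm : FreeGroup.of x * FreeGroup.mk l ∈ T := ⟨_, hl, rfl⟩
        rw [this, map_mul, Equiv.Perm.mul_apply, ih hl', hedge x _ ⟨l, hl', rfl⟩ hm]
      | false =>
        have : FreeGroup.mk ((x, false) :: l) = (FreeGroup.of x)⁻¹ * FreeGroup.mk l := rfl
        have hm : (FreeGroup.of x)⁻¹ * FreeGroup.mk l ∈ T := ⟨_, hl, rfl⟩
        have := hedge x _ hm ⟨l, hl', by simp⟩
        rw [mul_inv_cancel_left] at this
        rw [‹FreeGroup.mk ((x, false) :: l) = _›, map_mul, map_inv, Equiv.Perm.mul_apply, ih hl',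
          Equiv.Perm.inv_eq_iff_eq, this]
  have htree (v : FreeGroup α ⧸ K) (hv : ∃ s ∈ T, (s : FreeGroup α ⧸ K) = v) :
      A (t v) (o, 1) = (v, 1) := by
    obtain ⟨l, hl, hlt⟩ := htT v
    have := hpath l hl
    rw [hlt, htv v hv] at this
    simpa using this
  let ρ : K →* FreeGroup α :=
    { toFun := fun k => (A k (o, 1)).2
      map_one' := by simp
      map_mul' := fun k k' => by
        have h' : A (k' : FreeGroup α) (o, 1) = (o, 1 * (A (k' : FreeGroup α) (o, 1)).2) := by
          ext1
          · exact (hA1 _ _ _).trans (hfix k')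
          · simp
        rw [Subgroup.coe_mul, map_mul, Equiv.Perm.mul_apply, h', hAmul]
        simp }
  let E : Set (FreeGroup α) := {g | ∃ x v, c x v = g}
  have hEK : E ⊆ K := by
    rintro _ ⟨x, v, rfl⟩
    by_cases hP : P x v
    · simp only [c, if_pos hP]
      obtain ⟨s, hs, hxs, hsv⟩ := hP
      rw [mul_assoc, SetLike.mem_coe, ← QuotientGroup.eq, htv _ ⟨_, hxs, by rw [← hsv]; rfl⟩]
      change _ = FreeGroup.of x • ((t v : FreeGroup α) : FreeGroup α ⧸ K)
      rw [htv v ⟨s, hs, hsv⟩]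
    · simp only [c, if_neg hP]
      exact K.one_mem
  have hcl : Subgroup.closure E ≤ K := (Subgroup.closure_le K).2 hEK
  have hρE : ∀ g (hg : g ∈ E), ρ ⟨g, hEK hg⟩ = g := by
    rintro _ ⟨x, v, rfl⟩
    change (A (c x v) (o, 1)).2 = c x v
    by_cases hP : P x v
    · have hv : t (FreeGroup.of x • v) * c x v = FreeGroup.of x * t v := by
        simp only [c, if_pos hP]; group
      obtain ⟨s, hs, hxs, hsv⟩ := hP
      have h₁ : A (FreeGroup.of x * t v) (o, 1) = (FreeGroup.of x • v, c x v) := by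
        rw [map_mul, Equiv.Perm.mul_apply, htree v ⟨s, hs, hsv⟩, hAof, mul_one]
      have h₂ : A (t (FreeGroup.of x • v)) (o, c x v) = (FreeGroup.of x • v, c x v) := by
        have := hAmul (t (FreeGroup.of x • v)) o 1 (c x v)
        rwa [htree _ ⟨_, hxs, by rw [← hsv]; rfl⟩, one_mul] at this
      rw [← hv, map_mul, Equiv.Perm.mul_apply, ← h₂] at h₁
      rw [(A (t (FreeGroup.of x • v))).injective h₁]
    · simp [c, if_neg hP]
  refine ⟨E, ?_, hcl, ρ, ?_, fun k => ?_, fun k hk => ?_⟩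
  · rintro _ ⟨x, v, rfl⟩
    by_cases hP : P x v
    · simp only [c, if_pos hP]
      exact Set.mem_insert_of_mem _ ⟨(_, x, _), ⟨htT _, Set.mem_univ _, htT _⟩, rfl⟩
    · simp only [c, if_neg hP]
      exact Set.mem_insert _ _
  · change (A u (o, 1)).2 = u
    have := hpath u.toWord (by simp)
    rw [FreeGroup.mk_toWord] at this
    have huo : (u : FreeGroup α ⧸ K) = (1 : FreeGroup α) := by
      rw [QuotientGroup.eq]; simpa using hu
    rw [this, huo, ht1]
    simp
  · have hcE (x : α) (v : FreeGroup α ⧸ K) : c x v ∈ Subgroup.closure E :=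
      Subgroup.subset_closure ⟨x, v, rfl⟩
    exact skewAction_snd_mem _ _ hcE _ _ (Subgroup.one_mem _)
  · have : Subgroup.closure E ≤ (ρ.eqLocus K.subtype).map K.subtype :=
      (Subgroup.closure_le _).2 fun g hg => ⟨⟨g, hEK hg⟩, hρE g hg, rfl⟩
    obtain ⟨k', hk', h⟩ := this hk
    obtain rfl : k' = k := Subtype.ext h
    exact hk'

/-- An injective self-map whose iterates have only finitely many different ranges is surjective. -/
theorem surjective_of_finite_range_iterate {X : Type*} {f : X → X} (hf : Injective f)
    (h : (Set.range fun n => Set.range f^[n]).Finite) : Surjective f := by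
  have : ¬ Injective fun n => Set.range f^[n] := fun hinj => Set.infinite_range_of_injective hinj h
  obtain ⟨m, n, hmn, hne⟩ := Function.not_injective_iff.1 this
  wlog hlt : m < n generalizing m n
  · exact this n m hmn.symm hne.symm (lt_of_le_of_ne (not_lt.1 hlt) hne.symm)
  intro x
  obtain ⟨y, hy⟩ : f^[m] x ∈ Set.range f^[n] := hmn ▸ ⟨x, rfl⟩
  obtain ⟨k, rfl⟩ := Nat.exists_eq_add_of_lt hlt
  rw [add_assoc, iterate_add_apply, iterate_succ_apply'] at hy
  exact ⟨f^[k] y, hf.iterate m hy⟩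

/-- If only injective endomorphisms of a free group of finite rank fix `u`, then `u` is a test
element. -/
theorem isTestElement_of_forall_injective [Finite α] {u : FreeGroup α}
    (hu : ∀ φ : FreeGroup α →* FreeGroup α, φ u = u → Injective φ) : IsTestElement u := by
  intro φ hφ
  refine ⟨hu φ hφ, ?_⟩
  obtain ⟨D, hD, hret⟩ := exists_retraction_onto_bounded u
  have hclosure (ψ : FreeGroup α →* FreeGroup α) (hψ : ψ u = u) :
      ∃ E ⊆ D, ψ.range = Subgroup.closure E := by
    obtain ⟨E, hED, hEK, ρ, hρu, hρ, hρE⟩ := hret ψ.range ⟨u, hψ⟩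
    refine ⟨E, hED, le_antisymm ?_ hEK⟩
    let θ : FreeGroup α ≃* ψ.range := MonoidHom.ofInjective (hu ψ hψ)
    let ρ' : ψ.range →* ψ.range := ρ.codRestrict ψ.range fun k => hEK (hρ k)
    have hθ : θ u = ⟨u, u, hψ⟩ := Subtype.ext hψ
    have hinj : Injective (θ.symm.toMonoidHom.comp (ρ'.comp θ.toMonoidHom)) := by
      apply hu
      change θ.symm (ρ' (θ u)) = u
      rw [MulEquiv.symm_apply_eq, hθ]
      exact Subtype.ext hρu
    have hρinj : Injective ρ' := by
      intro x y hxy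
      apply θ.symm.injective
      apply hinj
      change θ.symm (ρ' (θ (θ.symm x))) = θ.symm (ρ' (θ (θ.symm y)))
      simp [hxy]
    intro k hk
    have : ρ' ⟨k, hk⟩ = ⟨k, hk⟩ := hρinj (Subtype.ext (hρE (ρ' ⟨k, hk⟩) (hρ _)))
    have hk' : ρ ⟨k, hk⟩ = k := congrArg Subtype.val this
    exact hk' ▸ hρ ⟨k, hk⟩
  refine surjective_of_finite_range_iterate (hu φ hφ)
    ((hD.powerset.image fun E => (Subgroup.closure E : Set (FreeGroup α))).subset ?_)
  rintro _ ⟨n, rfl⟩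
  obtain ⟨ψ, hψ⟩ : ∃ ψ : FreeGroup α →* FreeGroup α, ⇑ψ = φ^[n] :=
    ⟨HPow.hPow (α := Monoid.End (FreeGroup α)) φ n, Monoid.End.coe_pow _ φ n⟩
  obtain ⟨E, hED, hE⟩ := hclosure ψ (by rw [hψ]; exact iterate_fixed hφ n)
  refine ⟨E, hED, ?_⟩
  dsimp only
  rw [← hE, MonoidHom.coe_range, hψ]

end FreeGroupFacts

section SumOfSquares

/-- The group of upper unitriangular `3 × 3` matrices over `ZMod 2`, with `x`, `y` the entries above
the diagonal and `z` the corner entry. -/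
@[ext]
structure HeisenbergTwo where
  x : ZMod 2
  y : ZMod 2
  z : ZMod 2

namespace HeisenbergTwo

instance : Mul HeisenbergTwo := ⟨fun g h => ⟨g.x + h.x, g.y + h.y, g.z + h.z + g.x * h.y⟩⟩
instance : One HeisenbergTwo := ⟨⟨0, 0, 0⟩⟩
instance : Inv HeisenbergTwo := ⟨fun g => ⟨-g.x, -g.y, -g.z + g.x * g.y⟩⟩

@[simp] theorem mul_x (g h : HeisenbergTwo) : (g * h).x = g.x + h.x := rfl
@[simp] theorem mul_y (g h : HeisenbergTwo) : (g * h).y = g.y + h.y := rfl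
@[simp] theorem mul_z (g h : HeisenbergTwo) : (g * h).z = g.z + h.z + g.x * h.y := rfl
@[simp] theorem one_x : (1 : HeisenbergTwo).x = 0 := rfl
@[simp] theorem one_y : (1 : HeisenbergTwo).y = 0 := rfl
@[simp] theorem one_z : (1 : HeisenbergTwo).z = 0 := rfl
@[simp] theorem inv_x (g : HeisenbergTwo) : g⁻¹.x = -g.x := rfl
@[simp] theorem inv_y (g : HeisenbergTwo) : g⁻¹.y = -g.y := rfl
@[simp] theorem inv_z (g : HeisenbergTwo) : g⁻¹.z = -g.z + g.x * g.y := rfl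

instance : Group HeisenbergTwo :=
  Group.ofLeftAxioms (fun _ _ _ => by ext <;> simp <;> ring) (fun _ => by ext <;> simp)
    (fun _ => by
      ext <;> simp [CharTwo.add_self_eq_zero, CharTwo.neg_eq, add_comm, add_left_comm])

theorem sq_eq (g : HeisenbergTwo) : g ^ 2 = ⟨0, 0, g.x * g.y⟩ := by
  rw [pow_two]
  ext <;> simp [CharTwo.add_self_eq_zero]

/-- The entry `x` as a homomorphism. -/
def xHom : HeisenbergTwo →* Multiplicative (ZMod 2) where
  toFun g := .ofAdd g.x
  map_one' := rfl
  map_mul' _ _ := rfl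

/-- The entry `y` as a homomorphism. -/
def yHom : HeisenbergTwo →* Multiplicative (ZMod 2) where
  toFun g := .ofAdd g.y
  map_one' := rfl
  map_mul' _ _ := rfl

end HeisenbergTwo

/-- The product of the squares of the three generators. -/
def squaresWord : FreeGroup (Fin 3) := .of 0 ^ 2 * .of 1 ^ 2 * .of 2 ^ 2

theorem sum_mul_comp_eq_of_squaresWord_fixed {φ : FreeGroup (Fin 3) →* FreeGroup (Fin 3)}
    (hφ : φ squaresWord = squaresWord) (f h : FreeGroup (Fin 3) →* Multiplicative (ZMod 2)) :
    ∑ k, (f (φ (.of k))).toAdd * (h (φ (.of k))).toAdd =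
      ∑ k, (f (.of k)).toAdd * (h (.of k)).toAdd := by
  let A : FreeGroup (Fin 3) →* HeisenbergTwo :=
    FreeGroup.lift fun k => ⟨(f (.of k)).toAdd, (h (.of k)).toAdd, 0⟩
  have hx (w) : (A w).x = (f w).toAdd := by
    have : HeisenbergTwo.xHom.comp A = f := by
      ext k; simp [A, HeisenbergTwo.xHom]
    rw [← this]; rfl
  have hy (w) : (A w).y = (h w).toAdd := by
    have : HeisenbergTwo.yHom.comp A = h := by
      ext k; simp [A, HeisenbergTwo.yHom]
    rw [← this]; rfl
  have key := congrArg (fun w => (A w).z) hφ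
  simpa [squaresWord, HeisenbergTwo.sq_eq, hx, hy, Fin.sum_univ_three] using key

theorem isTestElement_squaresWord : IsTestElement squaresWord := by
  refine isTestElement_of_forall_injective fun φ hφ =>
    freeGroup_injective_of_mod_two φ fun f hf => ?_
  ext i
  have := sum_mul_comp_eq_of_squaresWord_fixed hφ f
    (FreeGroup.lift fun k => .ofAdd (if k = i then 1 else 0))
  have hf' (k) : f (φ (.of k)) = 1 := DFunLike.congr_fun hf (.of k)
  simpa [hf'] using this.symm

end SumOfSquares

theorem IsTestElement.map_mulEquiv {G G' : Type*} [Group G] [Group G'] (e : G ≃* G') {g : G}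
    (hg : IsTestElement g) : IsTestElement (e g) := by
  intro φ hφ
  have h := hg (e.symm.toMonoidHom.comp (φ.comp e.toMonoidHom)) (by simp [hφ])
  have : ⇑φ = e ∘ (e.symm.toMonoidHom.comp (φ.comp e.toMonoidHom)) ∘ e.symm := by
    ext; simp
  rw [this]
  exact e.bijective.comp (h.comp e.symm.bijective)

section Counterexample

/-- The words `b⁻¹a⁻¹b`, `bab⁻¹`, `a⁻²ba²` in the generators `a`, `b`. -/
def surfaceHom : FreeGroup (Fin 3) →* FreeGroup (Fin 2) :=
  FreeGroup.lift ![(.of 1)⁻¹ * (.of 0)⁻¹ * .of 1, .of 1 * .of 0 * (.of 1)⁻¹,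
    (.of 0)⁻¹ * (.of 0)⁻¹ * .of 1 * .of 0 * .of 0]

/-- The element `b⁻¹a⁻²b²a²`. -/
def rootWord : FreeGroup (Fin 2) :=
  (.of 1)⁻¹ * (.of 0)⁻¹ * (.of 0)⁻¹ * .of 1 * .of 1 * .of 0 * .of 0

theorem surfaceHom_squaresWord : surfaceHom squaresWord = rootWord ^ 2 := by
  simp only [squaresWord, surfaceHom, rootWord, map_mul, FreeGroup.lift_apply_of, pow_two]
  simp [mul_assoc]

theorem surfaceHom_injective : Injective surfaceHom := by
  let σ : Fin 2 → Equiv.Perm (Fin 5) := ![c[0, 3, 4], c[0, 1, 2]]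
  let c : Fin 2 → Fin 5 → FreeGroup (Fin 3) :=
    ![![1, (.of 0)⁻¹, .of 1, 1, 1], ![1, 1, 1, 1, .of 2]]
  have hgen (k : Fin 3) (h : FreeGroup (Fin 3)) :
      skewAction σ c (surfaceHom (.of k)) (0, h) = (0, .of k * h) := by
    have h01 : σ 0 0 = 3 := by decide
    have h02 : σ 0 3 = 4 := by decide
    have h03 : (σ 0).symm 4 = 3 := by decide
    have h04 : (σ 0).symm 3 = 0 := by decide
    have h05 : σ 0 2 = 2 := by decide
    have h06 : (σ 0).symm 1 = 1 := by decide
    have h11 : σ 1 0 = 1 := by decide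
    have h12 : (σ 1).symm 1 = 0 := by decide
    have h13 : (σ 1).symm 0 = 2 := by decide
    have h14 : σ 1 2 = 0 := by decide
    have h15 : σ 1 4 = 4 := by decide
    fin_cases k <;>
      simp [surfaceHom, Equiv.Perm.inv_def, h01, h02, h03, h04, h05, h06, h11, h12, h13, h14, h15,
        c]
  have hact (w : FreeGroup (Fin 3)) (h : FreeGroup (Fin 3)) :
      skewAction σ c (surfaceHom w) (0, h) = (0, w * h) := by
    induction w using FreeGroup.induction_on generalizing h with
    | C1 => simp
    | of k => exact hgen k h
    | inv_of k _ =>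
      rw [map_inv, map_inv, Equiv.Perm.inv_eq_iff_eq, hgen, mul_inv_cancel_left]
    | mul w w' hw hw' =>
      rw [map_mul, map_mul, Equiv.Perm.mul_apply, hw', hw, mul_assoc]
  intro w w' h
  simpa [h, hact w'] using (hact w 1).symm

theorem not_isTestElement_rootWord_sq : ¬ IsTestElement (rootWord ^ 2) := by
  intro htest
  let φ : FreeGroup (Fin 2) →* FreeGroup (Fin 2) := FreeGroup.lift ![1, rootWord]
  have hfix : φ rootWord = rootWord := by
    conv_lhs => rw [rootWord]
    simp [φ]
  have h := (htest φ (by rw [map_pow, hfix])).1 (a₁ := .of 0) (a₂ := 1) (by simp [φ])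
  exact FreeGroup.of_ne_one 0 h

theorem eq_top_of_isRetract_of_surfaceHom_range_le {R : Subgroup (FreeGroup (Fin 2))}
    (hR : IsRetract R) (hle : surfaceHom.range ≤ R) : R = ⊤ := by
  obtain ⟨r, hr, hfix⟩ := hR
  have hinj : Injective r := by
    refine freeGroup_injective_of_mod_two r fun f hf => ?_
    have hf' (k : Fin 3) : f (surfaceHom (.of k)) = 1 := by
      have := DFunLike.congr_fun hf (surfaceHom (.of k))
      rwa [MonoidHom.comp_apply, hfix _ (hle ⟨_, rfl⟩)] at this
    have h1 := hf' 1
    have h2 := hf' 2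
    ext i
    fin_cases i
    · simpa [surfaceHom] using h1
    · simpa [surfaceHom, mul_comm, mul_assoc, mul_left_comm] using h2
  refine eq_top_iff.2 fun x _ => ?_
  have hx : r x ∈ R := hr ▸ ⟨x, rfl⟩
  exact hinj (hfix _ hx) ▸ hx

end Counterexample

theorem test_element_conjecture_fails :
    ∃ (n : ℕ) (H : Subgroup (FreeGroup (Fin n))) (g : FreeGroup (Fin n)) (hg : g ∈ H),
      H.FG ∧ (∀ R : Subgroup (FreeGroup (Fin n)), IsRetract R → H ≤ R → R = ⊤) ∧
      IsTestElement (⟨g, hg⟩ : H) ∧ ¬ IsTestElement g := by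
  refine ⟨2, surfaceHom.range, rootWord ^ 2, ⟨squaresWord, surfaceHom_squaresWord⟩, ?_,
    fun R => eq_top_of_isRetract_of_surfaceHom_range_le, ?_, not_isTestElement_rootWord_sq⟩
  · exact (Group.fg_iff_subgroup_fg _).1 (Group.fg_range _)
  · convert isTestElement_squaresWord.map_mulEquiv (MonoidHom.ofInjective surfaceHom_injective)
    exact Subtype.ext surfaceHom_squaresWord.symm
end
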